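/- For a centrally normalized skew ruled surface (support function q = gv/w), the relative magnitudes are H = g'/δ, K = (g'/δ)², S = -g[κv² + δ²(κ - λ)]/(2δ²v), and J = 3[κgv² + 2δg'v + δ²g(κ - λ)]/(2δ²v); in particular H² - K = 0 at every point (all points are relative umbilics). -/

import Mathlib

noncomputable section

open Real

/-- Points/vectors of Euclidean 3-space. -/
abbrev E3 := Fin 3 → ℝ

/-- Euclidean scalar product in `E3`. -/
def dot3 (a b : E3) : ℝ := a 0 * b 0 + a 1 * b 1 + a 2 * b 2

/-- Cross product in `E3`. -/
def cross3 (a b : E3) : E3 :=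
  ![a 1 * b 2 - a 2 * b 1, a 2 * b 0 - a 0 * b 2, a 0 * b 1 - a 1 * b 0]

/-- Triple (scalar) product `(a, b, c)`. -/
def det3 (a b c : E3) : ℝ := dot3 a (cross3 b c)

/-- Partial derivative with respect to the first variable `u`. -/
def pderivU {F : Type*} [NormedAddCommGroup F] [NormedSpace ℝ F]
    (f : ℝ → ℝ → F) (u v : ℝ) : F := deriv (fun t => f t v) u

/-- Partial derivative with respect to the second variable `v`. -/
def pderivV {F : Type*} [NormedAddCommGroup F] [NormedSpace ℝ F]
    (f : ℝ → ℝ → F) (u v : ℝ) : F := deriv (fun t => f u t) v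

/-!
For `q = g v / w` the general formula for the relative normal collapses to
`y = -(g' v / δ + κ g) e - g z`: its component along the central normal `n` vanishes and `y` is
affine in `v`. Pair the Weingarten equations with `z`, which satisfies `⟨z, x_u⟩ = δ ≠ 0`,
`⟨z, x_v⟩ = 0` and `⟨z, y_u⟩ = -g'`, and use `y_v = -(g' / δ) x_v`: the relative shape operator is
triangular with both diagonal entries `g' / δ`, so every point is a relative umbilic.

For `J` and `S` the point is that the expressions in which `q` enters are simple:
`w² q_v + v q = g w`, and `q q_vv - q_v²`, `q q_uv - q_u q_v` are `q²` times second derivatives of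
`log q = log g + log v - log w`, so that `g'` drops out of `S`.
-/

open Filter Topology Matrix

section Vectors

theorem dot3_eq_dotProduct (a b : E3) : dot3 a b = a ⬝ᵥ b := by
  simp [dot3, dotProduct, Fin.sum_univ_three]

theorem cross3_eq_crossProduct (a b : E3) : cross3 a b = a ⨯₃ b :=
  (cross_apply a b).symm

theorem hasDerivAt_dotProduct {ι : Type*} [Fintype ι] {a b : ℝ → ι → ℝ} {a' b' : ι → ℝ} {u : ℝ}
    (ha : HasDerivAt a a' u) (hb : HasDerivAt b b' u) :
    HasDerivAt (fun t => a t ⬝ᵥ b t) (a u ⬝ᵥ b' + a' ⬝ᵥ b u) u :=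
  (dotProductBilin (m := ι) (A := ℝ) ℝ ℝ).toContinuousBilinearMap.hasDerivAt_of_bilinear
    (fun _ => ha) (fun _ => hb)

theorem differentiableAt_crossProduct {a b : ℝ → E3} {u : ℝ}
    (ha : DifferentiableAt ℝ a u) (hb : DifferentiableAt ℝ b u) :
    DifferentiableAt ℝ (fun t => a t ⨯₃ b t) u :=
  ((crossProduct (R := ℝ)).toContinuousBilinearMap.hasDerivAt_of_bilinear
    (fun _ => ha.hasDerivAt) (fun _ => hb.hasDerivAt)).differentiableAt

theorem differentiableOn_det3 {a b c : ℝ → E3} {I : Set ℝ} (ha : DifferentiableOn ℝ a I)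
    (hb : DifferentiableOn ℝ b I) (hc : DifferentiableOn ℝ c I) :
    DifferentiableOn ℝ (fun t => det3 (a t) (b t) (c t)) I := by
  simp only [det3, dot3, cross3, cons_val]
  fun_prop

theorem dotProduct_deriv_eq_zero_of_unit {ι : Type*} [Fintype ι] {a : ℝ → ι → ℝ} {u : ℝ}
    (ha : DifferentiableAt ℝ a u) (hunit : ∀ᶠ t in 𝓝 u, a t ⬝ᵥ a t = 1) :
    a u ⬝ᵥ deriv a u = 0 := by
  have hconst : HasDerivAt (fun t => a t ⬝ᵥ a t) 0 u :=
    (hasDerivAt_const u 1).congr_of_eventuallyEq hunit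
  have h := (hasDerivAt_dotProduct ha.hasDerivAt ha.hasDerivAt).unique hconst
  rw [dotProduct_comm (deriv a u)] at h
  linarith

end Vectors

section CentralTangent

/-- The central tangent vector `z = e × n` of a ruled surface with unit rulings `e`, where
`n = e'` is the central normal vector. -/
def centralTangent (e : ℝ → E3) (u : ℝ) : E3 := cross3 (e u) (deriv e u)

variable {e : ℝ → E3} {u : ℝ}

theorem centralTangent_dotProduct_ruling : centralTangent e u ⬝ᵥ e u = 0 := by
  rw [centralTangent, cross3_eq_crossProduct, dotProduct_comm, dot_self_cross]

theorem centralTangent_dotProduct_deriv : centralTangent e u ⬝ᵥ deriv e u = 0 := by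
  rw [centralTangent, cross3_eq_crossProduct, dotProduct_comm, dot_cross_self]

theorem centralTangent_dotProduct_self (he : DifferentiableAt ℝ e u)
    (heu : ∀ᶠ t in 𝓝 u, e t ⬝ᵥ e t = 1) (hnu : deriv e u ⬝ᵥ deriv e u = 1) :
    centralTangent e u ⬝ᵥ centralTangent e u = 1 := by
  rw [centralTangent, cross3_eq_crossProduct, cross_dot_cross, heu.self_of_nhds, hnu,
    dotProduct_deriv_eq_zero_of_unit he heu, one_mul, zero_mul, sub_zero]

theorem differentiableAt_centralTangent (he : DifferentiableAt ℝ e u)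
    (hn : DifferentiableAt ℝ (deriv e) u) : DifferentiableAt ℝ (centralTangent e) u := by
  rw [show centralTangent e = fun t => e t ⨯₃ deriv e t from
    funext fun t => cross3_eq_crossProduct (e t) (deriv e t)]
  exact differentiableAt_crossProduct he hn

end CentralTangent

section RuledSurface

variable {F : Type*} [NormedAddCommGroup F] [NormedSpace ℝ F]

/-- The ruled surface with striction curve `s` and rulings spanned by `e`. -/
def ruledSurface (s e : ℝ → F) (u v : ℝ) : F := s u + v • e u

theorem pderivV_ruledSurface (s e : ℝ → F) (u v : ℝ) :
    pderivV (ruledSurface s e) u v = e u :=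
  (((hasDerivAt_id v).smul_const (e u)).const_add (s u)).deriv.trans (one_smul ℝ (e u))

theorem pderivU_ruledSurface {s e : ℝ → F} {u : ℝ} (hs : DifferentiableAt ℝ s u)
    (he : DifferentiableAt ℝ e u) (v : ℝ) :
    pderivU (ruledSurface s e) u v = deriv s u + v • deriv e u :=
  (hs.hasDerivAt.add (he.hasDerivAt.const_smul v)).deriv

end RuledSurface

section ShapeOperator

variable {F : Type*} [NormedAddCommGroup F] [NormedSpace ℝ F]

/-- `b` is the matrix at `(u, v)` of the relative shape operator of the surface `x` with relative
normal `y`: the Weingarten equations `y_i = -∑ⱼ b i j x_j` hold, where the indices `0` and `1` stand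
for `u` and `v`. -/
def IsRelShapeOperator (x y : ℝ → ℝ → F) (u v : ℝ) (b : Matrix (Fin 2) (Fin 2) ℝ) : Prop :=
  pderivU y u v = -(b 0 0 • pderivU x u v + b 0 1 • pderivV x u v) ∧
  pderivV y u v = -(b 1 0 • pderivU x u v + b 1 1 • pderivV x u v)

namespace IsRelShapeOperator

variable {x y : ℝ → ℝ → F} {u v c : ℝ} {b : Matrix (Fin 2) (Fin 2) ℝ}

theorem apply_zero_zero (h : IsRelShapeOperator x y u v b) {f : Module.Dual ℝ F}
    (hxu : f (pderivU x u v) ≠ 0) (hxv : f (pderivV x u v) = 0)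
    (hyu : f (pderivU y u v) = -(c * f (pderivU x u v))) : b 0 0 = c := by
  rw [h.1] at hyu
  simp only [map_neg, map_add, map_smul, smul_eq_mul, hxv, mul_zero, add_zero, neg_inj] at hyu
  exact mul_right_cancel₀ hxu hyu

theorem apply_one_zero (h : IsRelShapeOperator x y u v b) {f : Module.Dual ℝ F}
    (hxu : f (pderivU x u v) ≠ 0) (hxv : f (pderivV x u v) = 0)
    (hyv : f (pderivV y u v) = 0) : b 1 0 = 0 := by
  rw [h.2] at hyv
  simpa [hxv, hxu] using hyv

theorem apply_one_one (h : IsRelShapeOperator x y u v b) (hxv : pderivV x u v ≠ 0)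
    (hyv : pderivV y u v = -(c • pderivV x u v)) (h10 : b 1 0 = 0) : b 1 1 = c := by
  have hsmul : b 1 1 • pderivV x u v = c • pderivV x u v := by
    simpa [h10, hyv] using h.2.symm
  exact smul_left_injective ℝ hxv hsmul

theorem half_trace_and_det (h : IsRelShapeOperator x y u v b) {f : Module.Dual ℝ F}
    (hxu : f (pderivU x u v) ≠ 0) (hxv : f (pderivV x u v) = 0) (hxv0 : pderivV x u v ≠ 0)
    (hyu : f (pderivU y u v) = -(c * f (pderivU x u v)))
    (hyv : pderivV y u v = -(c • pderivV x u v)) : b.trace / 2 = c ∧ b.det = c ^ 2 := by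
  have h00 := h.apply_zero_zero hxu hxv hyu
  have h10 := h.apply_one_zero hxu hxv (by simp [hyv, hxv])
  have h11 := h.apply_one_one hxv0 hyv h10
  rw [trace_fin_two, det_fin_two, h00, h10, h11]
  constructor <;> ring

end IsRelShapeOperator

end ShapeOperator

section AreaDensity

variable {δ : ℝ → ℝ} {u : ℝ}

/-- The density `w = |x_u × x_v| = √(δ² + v²)` of the Euclidean area element of a ruled surface with
parameter of distribution `δ`. -/
def areaDensity (δ : ℝ → ℝ) (u v : ℝ) : ℝ := √((δ u) ^ 2 + v ^ 2)

theorem sq_areaDensity (δ : ℝ → ℝ) (u v : ℝ) : areaDensity δ u v ^ 2 = δ u ^ 2 + v ^ 2 :=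
  sq_sqrt (by positivity)

theorem areaDensity_ne_zero (hδ0 : δ u ≠ 0) (v : ℝ) : areaDensity δ u v ≠ 0 :=
  (sqrt_pos.2 (by positivity)).ne'

theorem hasDerivAt_areaDensity_right (hδ0 : δ u ≠ 0) (v : ℝ) :
    HasDerivAt (fun r => areaDensity δ u r) (v / areaDensity δ u v) v := by
  have h := ((hasDerivAt_pow 2 v).const_add (δ u ^ 2)).sqrt (by positivity)
  refine h.congr_deriv ?_
  simp only [areaDensity]
  field_simp
  simp

theorem hasDerivAt_areaDensity_left (hδ0 : δ u ≠ 0) (hδ : DifferentiableAt ℝ δ u) (v : ℝ) :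
    HasDerivAt (fun t => areaDensity δ t v) (δ u * deriv δ u / areaDensity δ u v) u := by
  have h := ((hδ.hasDerivAt.fun_pow 2).add_const (v ^ 2)).sqrt (by positivity)
  refine h.congr_deriv ?_
  simp only [areaDensity]
  field_simp
  simp only [Nat.cast_ofNat, Nat.add_one_sub_one]
  ring

end AreaDensity

section CentralSupport

variable {δ g : ℝ → ℝ} {u : ℝ}

/-- The support function `q = g v / w` of the central normalization with factor `g`. -/
def centralSupport (δ g : ℝ → ℝ) (u v : ℝ) : ℝ := g u * v / areaDensity δ u v

theorem pderivV_centralSupport (hδ0 : δ u ≠ 0) (v : ℝ) :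
    pderivV (centralSupport δ g) u v = g u * δ u ^ 2 / areaDensity δ u v ^ 3 := by
  have hw := areaDensity_ne_zero hδ0 v
  have h := ((hasDerivAt_id v).const_mul (g u)).fun_div (hasDerivAt_areaDensity_right hδ0 v) hw
  refine h.deriv.trans ?_
  simp only [id]
  field_simp
  linear_combination g u * sq_areaDensity δ u v

theorem pderivU_centralSupport (hδ0 : δ u ≠ 0) (hδ : DifferentiableAt ℝ δ u)
    (hg : DifferentiableAt ℝ g u) (v : ℝ) :
    pderivU (centralSupport δ g) u v = deriv g u * v / areaDensity δ u v
      - g u * δ u * deriv δ u * v / areaDensity δ u v ^ 3 := by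
  have hw := areaDensity_ne_zero hδ0 v
  have h := (hg.hasDerivAt.mul_const v).fun_div (hasDerivAt_areaDensity_left hδ0 hδ v) hw
  refine h.deriv.trans ?_
  field_simp

theorem pderivV_pderivV_centralSupport (hδ0 : δ u ≠ 0) (v : ℝ) :
    pderivV (pderivV (centralSupport δ g)) u v
      = -3 * g u * δ u ^ 2 * v / areaDensity δ u v ^ 5 := by
  have hw := areaDensity_ne_zero hδ0 v
  have h := (hasDerivAt_const v (g u * δ u ^ 2)).fun_div
    ((hasDerivAt_areaDensity_right hδ0 v).fun_pow 3) (pow_ne_zero 3 hw)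
  rw [pderivV, funext (pderivV_centralSupport hδ0)]
  refine h.deriv.trans ?_
  field_simp
  simp only [Nat.cast_ofNat, Nat.add_one_sub_one]
  ring

theorem pderivV_pderivU_centralSupport (hδ0 : δ u ≠ 0) (hδ : DifferentiableAt ℝ δ u)
    (hg : DifferentiableAt ℝ g u) (v : ℝ) :
    pderivV (pderivU (centralSupport δ g)) u v
      = deriv g u * δ u ^ 2 / areaDensity δ u v ^ 3
        - g u * δ u * deriv δ u * (δ u ^ 2 - 2 * v ^ 2) / areaDensity δ u v ^ 5 := by
  have hw := areaDensity_ne_zero hδ0 v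
  have hw2 := sq_areaDensity δ u v
  have hwv := hasDerivAt_areaDensity_right hδ0 v
  have h := (((hasDerivAt_id v).const_mul (deriv g u)).fun_div hwv hw).fun_sub
    (((hasDerivAt_id v).const_mul (g u * δ u * deriv δ u)).fun_div (hwv.fun_pow 3)
      (pow_ne_zero 3 hw))
  rw [pderivV, funext (pderivU_centralSupport hδ0 hδ hg)]
  refine h.deriv.trans ?_
  simp only [id]
  field_simp
  simp only [Nat.cast_ofNat, Nat.add_one_sub_one]
  linear_combination (deriv g u * areaDensity δ u v ^ 4
    - g u * δ u * deriv δ u * areaDensity δ u v ^ 2) * hw2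

theorem sq_areaDensity_mul_pderivV_centralSupport_add (hδ0 : δ u ≠ 0) (v : ℝ) :
    areaDensity δ u v ^ 2 * pderivV (centralSupport δ g) u v + v * centralSupport δ g u v
      = g u * areaDensity δ u v := by
  have hw := areaDensity_ne_zero hδ0 v
  rw [pderivV_centralSupport hδ0, centralSupport]
  field_simp
  rw [sq_areaDensity, mul_comm]

end CentralSupport

section RelativeNormal

variable {F : Type*} [NormedAddCommGroup F] [NormedSpace ℝ F]

/-- The relative normal of a ruled surface with support function `q`, in terms of the moving frame
`e`, `n`, `z`, the parameter of distribution `δ` and the conical curvature `κ`. -/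
def relNormal (δ κ : ℝ → ℝ) (q : ℝ → ℝ → ℝ) (e n z : ℝ → F) (u v : ℝ) : F :=
  (-(areaDensity δ u v) * (δ u * pderivU q u v
      + pderivV q u v * (κ u * areaDensity δ u v ^ 2 + deriv δ u * v)) / δ u ^ 2) • e u
    + ((δ u ^ 2 * q u v - areaDensity δ u v ^ 2 * v * pderivV q u v)
      / (δ u * areaDensity δ u v)) • n u
    + (-(v * q u v + areaDensity δ u v ^ 2 * pderivV q u v) / areaDensity δ u v) • z u

/-- The closed form of the relative normal for the central normalization with factor `g`. -/
def centralRelNormal (δ κ g : ℝ → ℝ) (e z : ℝ → F) (u v : ℝ) : F :=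
  -(deriv g u * v / δ u + κ u * g u) • e u - g u • z u

variable {δ κ g : ℝ → ℝ} {e n z : ℝ → F} {u v : ℝ}

theorem relNormal_centralSupport (hδ0 : δ u ≠ 0) (hδ : DifferentiableAt ℝ δ u)
    (hg : DifferentiableAt ℝ g u) :
    relNormal δ κ (centralSupport δ g) e n z u v = centralRelNormal δ κ g e z u v := by
  have hw := areaDensity_ne_zero hδ0 v
  have along_e : -(areaDensity δ u v) * (δ u * pderivU (centralSupport δ g) u v
      + pderivV (centralSupport δ g) u v * (κ u * areaDensity δ u v ^ 2 + deriv δ u * v)) / δ u ^ 2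
      = -(deriv g u * v / δ u + κ u * g u) := by
    rw [pderivU_centralSupport hδ0 hδ hg, pderivV_centralSupport hδ0]
    field_simp
    ring
  have along_n : δ u ^ 2 * centralSupport δ g u v
      - areaDensity δ u v ^ 2 * v * pderivV (centralSupport δ g) u v = 0 := by
    rw [pderivV_centralSupport hδ0, centralSupport]
    field_simp
    ring
  have along_z : -(v * centralSupport δ g u v
      + areaDensity δ u v ^ 2 * pderivV (centralSupport δ g) u v) / areaDensity δ u v = -g u := by
    rw [add_comm, sq_areaDensity_mul_pderivV_centralSupport_add hδ0, neg_div,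
      mul_div_cancel_right₀ _ hw]
  rw [relNormal, along_e, along_n, along_z, centralRelNormal, zero_div, zero_smul, add_zero,
    neg_smul (g u), ← sub_eq_add_neg]

theorem pderivV_relNormal_centralSupport (hδ0 : δ u ≠ 0) (hδ : DifferentiableAt ℝ δ u)
    (hg : DifferentiableAt ℝ g u) :
    pderivV (relNormal δ κ (centralSupport δ g) e n z) u v = -((deriv g u / δ u) • e u) := by
  have h := (((((hasDerivAt_id v).const_mul (deriv g u)).div_const (δ u)).add_const
    (κ u * g u)).fun_neg.smul_const (e u)).sub_const (g u • z u)
  rw [pderivV, funext fun r => relNormal_centralSupport (v := r) hδ0 hδ hg]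
  refine h.deriv.trans ?_
  rw [mul_one, neg_smul]

theorem dotProduct_pderivU_centralRelNormal {ι : Type*} [Fintype ι] {e z : ℝ → ι → ℝ}
    (hδ0 : δ u ≠ 0) (hδ : DifferentiableAt ℝ δ u) (hκ : DifferentiableAt ℝ κ u)
    (hg : DifferentiableAt ℝ g u) (hg' : DifferentiableAt ℝ (deriv g) u)
    (he : DifferentiableAt ℝ e u) (hz : DifferentiableAt ℝ z u)
    (hze : z u ⬝ᵥ e u = 0) (hzn : z u ⬝ᵥ deriv e u = 0) (hzz : ∀ᶠ t in 𝓝 u, z t ⬝ᵥ z t = 1) :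
    z u ⬝ᵥ pderivU (centralRelNormal δ κ g e z) u v = -deriv g u := by
  have hcoef : DifferentiableAt ℝ (fun t => -(deriv g t * v / δ t + κ t * g t)) u := by
    fun_prop (disch := exact hδ0)
  have h := (hcoef.hasDerivAt.fun_smul he.hasDerivAt).fun_sub
    (hg.hasDerivAt.fun_smul hz.hasDerivAt)
  have hzz' := dotProduct_deriv_eq_zero_of_unit hz hzz
  rw [pderivU, show deriv (fun t => centralRelNormal δ κ g e z t v) u = _ from h.deriv]
  simp [dotProduct_add, dotProduct_sub, dotProduct_smul, hze, hzn, hzz', hzz.self_of_nhds]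

end RelativeNormal

section Umbilic

variable {I : Set ℝ} {s e : ℝ → E3} {δ κ g : ℝ → ℝ} {u v : ℝ}

theorem centralTangent_dotProduct_pderivU_ruledSurface (hs : DifferentiableAt ℝ s u)
    (he : DifferentiableAt ℝ e u) :
    centralTangent e u ⬝ᵥ pderivU (ruledSurface s e) u v = centralTangent e u ⬝ᵥ deriv s u := by
  rw [pderivU_ruledSurface hs he, dotProduct_add, dotProduct_smul, centralTangent_dotProduct_deriv,
    smul_zero, add_zero]

theorem centralTangent_dotProduct_pderivU_relNormal (hI : IsOpen I) (hu : u ∈ I)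
    (he : DifferentiableOn ℝ e I) (hn : DifferentiableAt ℝ (deriv e) u)
    (heu : ∀ t ∈ I, e t ⬝ᵥ e t = 1) (hnu : ∀ t ∈ I, deriv e t ⬝ᵥ deriv e t = 1)
    (hδ0 : ∀ t ∈ I, δ t ≠ 0) (hδ : DifferentiableOn ℝ δ I) (hκ : DifferentiableAt ℝ κ u)
    (hg : DifferentiableOn ℝ g I) (hg' : DifferentiableAt ℝ (deriv g) u) :
    centralTangent e u ⬝ᵥ pderivU
      (relNormal δ κ (centralSupport δ g) e (deriv e) (centralTangent e)) u v = -deriv g u := by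
  have hIn : ∀ t ∈ I, I ∈ 𝓝 t := fun t ht => hI.mem_nhds ht
  have heq : (relNormal δ κ (centralSupport δ g) e (deriv e) (centralTangent e) · v)
      =ᶠ[𝓝 u] (centralRelNormal δ κ g e (centralTangent e) · v) :=
    eventually_of_mem (hIn u hu) fun t ht => relNormal_centralSupport (hδ0 t ht)
      (hδ.differentiableAt (hIn t ht)) (hg.differentiableAt (hIn t ht))
  have hzz : ∀ᶠ t in 𝓝 u, centralTangent e t ⬝ᵥ centralTangent e t = 1 :=
    eventually_of_mem (hIn u hu) fun t ht => centralTangent_dotProduct_self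
      (he.differentiableAt (hIn t ht)) (eventually_of_mem (hIn t ht) heu) (hnu t ht)
  have heu' := he.differentiableAt (hIn u hu)
  rw [pderivU, heq.deriv_eq]
  exact dotProduct_pderivU_centralRelNormal (hδ0 u hu) (hδ.differentiableAt (hIn u hu)) hκ
    (hg.differentiableAt (hIn u hu)) hg' heu' (differentiableAt_centralTangent heu' hn)
    centralTangent_dotProduct_ruling centralTangent_dotProduct_deriv hzz

theorem IsRelShapeOperator.half_trace_and_det_of_centralSupport (hI : IsOpen I) (hu : u ∈ I)
    (hs : DifferentiableAt ℝ s u) (he : DifferentiableOn ℝ e I)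
    (hn : DifferentiableAt ℝ (deriv e) u)
    (heu : ∀ t ∈ I, e t ⬝ᵥ e t = 1) (hnu : ∀ t ∈ I, deriv e t ⬝ᵥ deriv e t = 1)
    (hsz : centralTangent e u ⬝ᵥ deriv s u = δ u)
    (hδ0 : ∀ t ∈ I, δ t ≠ 0) (hδ : DifferentiableOn ℝ δ I) (hκ : DifferentiableAt ℝ κ u)
    (hg : DifferentiableOn ℝ g I) (hg' : DifferentiableAt ℝ (deriv g) u)
    {b : Matrix (Fin 2) (Fin 2) ℝ}
    (hb : IsRelShapeOperator (ruledSurface s e)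
      (relNormal δ κ (centralSupport δ g) e (deriv e) (centralTangent e)) u v b) :
    b.trace / 2 = deriv g u / δ u ∧ b.det = (deriv g u / δ u) ^ 2 := by
  have hIu : I ∈ 𝓝 u := hI.mem_nhds hu
  have hxu : centralTangent e u ⬝ᵥ pderivU (ruledSurface s e) u v = δ u :=
    (centralTangent_dotProduct_pderivU_ruledSurface hs (he.differentiableAt hIu)).trans hsz
  have hyu := centralTangent_dotProduct_pderivU_relNormal (v := v) hI hu he hn heu hnu hδ0 hδ hκ
    hg hg'
  have hyv : pderivV (relNormal δ κ (centralSupport δ g) e (deriv e) (centralTangent e)) u v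
      = -((deriv g u / δ u) • pderivV (ruledSurface s e) u v) := by
    rw [pderivV_ruledSurface, pderivV_relNormal_centralSupport (hδ0 u hu)
      (hδ.differentiableAt hIu) (hg.differentiableAt hIu)]
  have he0 : e u ≠ 0 := fun h => by simpa [h] using heu u hu
  refine hb.half_trace_and_det (f := dotProductBilin ℝ ℝ (centralTangent e u)) ?_ ?_ ?_ ?_ hyv
  · simpa [hxu] using hδ0 u hu
  · simpa [pderivV_ruledSurface] using centralTangent_dotProduct_ruling
  · rwa [pderivV_ruledSurface]
  · simp [hxu, hyu, hδ0 u hu]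

end Umbilic

section MetricInvariants

/-- The Pick invariant of a ruled surface with invariants `δ`, `κ`, `lam` and support function
`q`. -/
def pickInvariant (δ κ lam : ℝ → ℝ) (q : ℝ → ℝ → ℝ) (u v : ℝ) : ℝ :=
  3 * (areaDensity δ u v ^ 2 * pderivV q u v + v * q u v)
      / (2 * δ u ^ 2 * areaDensity δ u v ^ 3 * q u v)
    * (areaDensity δ u v ^ 2 * (κ u * q u v * v + 2 * δ u * pderivU q u v
        + pderivV q u v * (κ u * areaDensity δ u v ^ 2 + deriv δ u * v - δ u ^ 2 * lam u))
      - δ u ^ 2 * q u v * (lam u * v - deriv δ u))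

/-- The scalar curvature of the relative metric of a ruled surface with invariants `δ`, `κ`, `lam`
and support function `q`. -/
def relScalarCurvature (δ κ lam : ℝ → ℝ) (q : ℝ → ℝ → ℝ) (u v : ℝ) : ℝ :=
  (1 / (2 * δ u ^ 2 * areaDensity δ u v ^ 3 * q u v))
    * (q u v ^ 2 * (-(κ u) * areaDensity δ u v ^ 4
        + δ u ^ 2 * (lam u * v ^ 2 - 2 * deriv δ u * v - δ u ^ 2 * lam u))
      + areaDensity δ u v ^ 4 * q u v * pderivV q u v * (2 * κ u * v + deriv δ u)
      + areaDensity δ u v ^ 4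
        * (κ u * areaDensity δ u v ^ 2 + deriv δ u * v - δ u ^ 2 * lam u)
        * (q u v * pderivV (pderivV q) u v - pderivV q u v ^ 2)
      - 2 * δ u * areaDensity δ u v ^ 4 * pderivU q u v * pderivV q u v
      + 2 * δ u * areaDensity δ u v ^ 4 * q u v * pderivV (pderivU q) u v)

variable {δ κ lam g : ℝ → ℝ} {u v : ℝ}

theorem pickInvariant_centralSupport (hδ0 : δ u ≠ 0) (hδ : DifferentiableAt ℝ δ u)
    (hg : DifferentiableAt ℝ g u) (hg0 : g u ≠ 0) (hv : v ≠ 0) :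
    pickInvariant δ κ lam (centralSupport δ g) u v
      = 3 * (κ u * g u * v ^ 2 + 2 * δ u * deriv g u * v + δ u ^ 2 * g u * (κ u - lam u))
        / (2 * δ u ^ 2 * v) := by
  have hw := areaDensity_ne_zero hδ0 v
  have hfactor : areaDensity δ u v ^ 2 * (κ u * centralSupport δ g u v * v
        + 2 * δ u * pderivU (centralSupport δ g) u v + pderivV (centralSupport δ g) u v
          * (κ u * areaDensity δ u v ^ 2 + deriv δ u * v - δ u ^ 2 * lam u))
      - δ u ^ 2 * centralSupport δ g u v * (lam u * v - deriv δ u)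
      = areaDensity δ u v
        * (κ u * g u * v ^ 2 + 2 * δ u * deriv g u * v + δ u ^ 2 * g u * (κ u - lam u)) := by
    rw [pderivU_centralSupport hδ0 hδ hg, pderivV_centralSupport hδ0, centralSupport]
    field_simp
    linear_combination g u * δ u ^ 2 * lam u * sq_areaDensity δ u v
  rw [pickInvariant, sq_areaDensity_mul_pderivV_centralSupport_add hδ0, hfactor, centralSupport]
  field_simp

theorem centralSupport_mul_pderivV_pderivV_sub (hδ0 : δ u ≠ 0) (v : ℝ) :
    centralSupport δ g u v * pderivV (pderivV (centralSupport δ g)) u v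
        - pderivV (centralSupport δ g) u v ^ 2
      = -g u ^ 2 * δ u ^ 2 * (δ u ^ 2 + 3 * v ^ 2) / areaDensity δ u v ^ 6 := by
  have hw := areaDensity_ne_zero hδ0 v
  rw [pderivV_pderivV_centralSupport hδ0, pderivV_centralSupport hδ0, centralSupport]
  field_simp
  ring

theorem centralSupport_mul_pderivV_pderivU_sub (hδ0 : δ u ≠ 0) (hδ : DifferentiableAt ℝ δ u)
    (hg : DifferentiableAt ℝ g u) (v : ℝ) :
    centralSupport δ g u v * pderivV (pderivU (centralSupport δ g)) u v
        - pderivU (centralSupport δ g) u v * pderivV (centralSupport δ g) u v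
      = 2 * g u ^ 2 * δ u * deriv δ u * v ^ 3 / areaDensity δ u v ^ 6 := by
  have hw := areaDensity_ne_zero hδ0 v
  rw [pderivV_pderivU_centralSupport hδ0 hδ hg, pderivU_centralSupport hδ0 hδ hg,
    pderivV_centralSupport hδ0, centralSupport]
  field_simp
  ring

theorem relScalarCurvature_centralSupport (hδ0 : δ u ≠ 0) (hδ : DifferentiableAt ℝ δ u)
    (hg : DifferentiableAt ℝ g u) (hg0 : g u ≠ 0) (hv : v ≠ 0) :
    relScalarCurvature δ κ lam (centralSupport δ g) u v
      = -(g u) * (κ u * v ^ 2 + δ u ^ 2 * (κ u - lam u)) / (2 * δ u ^ 2 * v) := by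
  have hw := areaDensity_ne_zero hδ0 v
  have hqv := pderivV_centralSupport (g := g) hδ0 v
  have hvv := centralSupport_mul_pderivV_pderivV_sub (g := g) hδ0 v
  have huv := centralSupport_mul_pderivV_pderivU_sub hδ0 hδ hg v
  have hgroup : ∀ A q qu qv quv : ℝ,
      A - 2 * δ u * areaDensity δ u v ^ 4 * qu * qv + 2 * δ u * areaDensity δ u v ^ 4 * q * quv
        = A + 2 * δ u * areaDensity δ u v ^ 4 * (q * quv - qu * qv) := by
    intros
    ring
  rw [relScalarCurvature, hgroup, hvv, huv, hqv, centralSupport]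
  field_simp
  linear_combination (δ u ^ 2 * (κ u * areaDensity δ u v ^ 2 + deriv δ u * v
    - lam u * (areaDensity δ u v ^ 2 + δ u ^ 2 + v ^ 2))) * sq_areaDensity δ u v

end MetricInvariants

theorem stmt_15_general {I : Set ℝ} (hI : IsOpen I) {s e : ℝ → E3}
    (hs : ContDiffOn ℝ 2 s I) (he : ContDiffOn ℝ 3 e I)
    (heu : ∀ u ∈ I, dot3 (e u) (e u) = 1) (hnu : ∀ u ∈ I, dot3 (deriv e u) (deriv e u) = 1)
    {κ δ lam g : ℝ → ℝ}
    (hκ : ∀ u ∈ I, κ u = det3 (e u) (deriv e u) (deriv (deriv e) u))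
    (hδ : ∀ u ∈ I, δ u = det3 (deriv s u) (e u) (deriv e u)) (hδ0 : ∀ u ∈ I, δ u ≠ 0)
    (hstr : ∀ u ∈ I, deriv s u = (δ u * lam u) • e u + δ u • centralTangent e u)
    (hg : ContDiffOn ℝ 2 g I) (hg0 : ∀ u ∈ I, g u ≠ 0)
    {u v : ℝ} (hu : u ∈ I) {b : Matrix (Fin 2) (Fin 2) ℝ}
    (hb : IsRelShapeOperator (ruledSurface s e)
      (relNormal δ κ (centralSupport δ g) e (deriv e) (centralTangent e)) u v b) :
    b.trace / 2 = deriv g u / δ u ∧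
    b.det = (deriv g u / δ u) ^ 2 ∧
    (v ≠ 0 →
      relScalarCurvature δ κ lam (centralSupport δ g) u v
        = -(g u) * (κ u * v ^ 2 + δ u ^ 2 * (κ u - lam u)) / (2 * δ u ^ 2 * v) ∧
      pickInvariant δ κ lam (centralSupport δ g) u v
        = 3 * (κ u * g u * v ^ 2 + 2 * δ u * deriv g u * v + δ u ^ 2 * g u * (κ u - lam u))
          / (2 * δ u ^ 2 * v)) ∧
    (b.trace / 2) ^ 2 - b.det = 0 := by
  have he₀ := he.differentiableOn (by norm_num)
  have hn := he.deriv_of_isOpen (m := 2) hI (by norm_num)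
  have hn₀ := hn.differentiableOn (by norm_num)
  have hn₁ := (hn.deriv_of_isOpen (m := 1) hI (by norm_num)).differentiableOn one_ne_zero
  have hs₁ := (hs.deriv_of_isOpen (m := 1) hI (by norm_num)).differentiableOn one_ne_zero
  have hg₀ := hg.differentiableOn (by norm_num)
  have hg₁ := (hg.deriv_of_isOpen (m := 1) hI (by norm_num)).differentiableOn one_ne_zero
  have hδ₀ : DifferentiableOn ℝ δ I := (differentiableOn_det3 hs₁ he₀ hn₀).congr hδ
  have hκ₀ : DifferentiableOn ℝ κ I := (differentiableOn_det3 he₀ hn₀ hn₁).congr hκ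
  simp only [dot3_eq_dotProduct] at heu hnu
  have hIu : I ∈ 𝓝 u := hI.mem_nhds hu
  have hδu := hδ₀.differentiableAt hIu
  have hgu := hg₀.differentiableAt hIu
  have hsz : centralTangent e u ⬝ᵥ deriv s u = δ u := by
    rw [hstr u hu, dotProduct_add, dotProduct_smul, dotProduct_smul,
      centralTangent_dotProduct_ruling, centralTangent_dotProduct_self (he₀.differentiableAt hIu)
      (eventually_of_mem hIu heu) (hnu u hu), smul_zero, zero_add, smul_eq_mul, mul_one]
  obtain ⟨hH, hK⟩ := hb.half_trace_and_det_of_centralSupport hI hu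
    ((hs.differentiableOn (by norm_num)).differentiableAt hIu) he₀ (hn₀.differentiableAt hIu)
    heu hnu hsz hδ0 hδ₀ (hκ₀.differentiableAt hIu) hg₀ (hg₁.differentiableAt hIu)
  exact ⟨hH, hK, fun hv => ⟨relScalarCurvature_centralSupport (hδ0 u hu) hδu hgu (hg0 u hu) hv,
    pickInvariant_centralSupport (hδ0 u hu) hδu hgu (hg0 u hu) hv⟩, by rw [hH, hK, sub_self]⟩

/-- for a centrally normalized skew ruled surface (`q = gv/w`):
`H = g´/δ`, `K = (g´/δ)²`, `S = -g[κv² + δ²(κ-λ)]/(2δ²v)`,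
`J = 3[κgv² + 2δg´v + δ²g(κ-λ)]/(2δ²v)`, and `H² - K = 0` everywhere. -/
theorem stmt_15
    (I : Set ℝ) (hI : IsOpen I) (hIc : IsPreconnected I)
    (s e : ℝ → E3) (hs : ContDiff ℝ (⊤ : ℕ∞) s) (he : ContDiff ℝ (⊤ : ℕ∞) e)
    (heu : ∀ u ∈ I, dot3 (e u) (e u) = 1)
    (he'u : ∀ u ∈ I, dot3 (deriv e u) (deriv e u) = 1)
    (hse : ∀ u ∈ I, dot3 (deriv s u) (deriv e u) = 0)
    (n z : ℝ → E3) (hn : ∀ u, n u = deriv e u) (hz : ∀ u, z u = cross3 (e u) (n u))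
    (κ δ lam : ℝ → ℝ)
    (hκ : ∀ u, κ u = det3 (e u) (deriv e u) (deriv (deriv e) u))
    (hδ : ∀ u, δ u = det3 (deriv s u) (e u) (deriv e u))
    (hδ0 : ∀ u ∈ I, δ u ≠ 0)
    (hstr : ∀ u ∈ I, deriv s u = (δ u * lam u) • e u + δ u • z u)
    (x : ℝ → ℝ → E3) (hx : ∀ u v, x u v = s u + v • e u)
    (w : ℝ → ℝ → ℝ) (hw : ∀ u v, w u v = Real.sqrt ((δ u)^2 + v^2))
    (ξ : ℝ → ℝ → E3) (hξ : ∀ u v, ξ u v = (w u v)⁻¹ • (δ u • n u - v • z u))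
    (g : ℝ → ℝ) (hg : ContDiff ℝ (⊤ : ℕ∞) g) (hg0 : ∀ u ∈ I, g u ≠ 0)
    (q : ℝ → ℝ → ℝ) (hqdef : ∀ u v, q u v = g u * v / w u v)
    (y1 y2 y3 : ℝ → ℝ → ℝ)
    (hy1 : ∀ u v, y1 u v = -(w u v) * (δ u * pderivU q u v
      + pderivV q u v * (κ u * (w u v)^2 + deriv δ u * v)) / (δ u)^2)
    (hy2 : ∀ u v, y2 u v = ((δ u)^2 * q u v - (w u v)^2 * v * pderivV q u v) / (δ u * w u v))
    (hy3 : ∀ u v, y3 u v = -(v * q u v + (w u v)^2 * pderivV q u v) / (w u v))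
    (y : ℝ → ℝ → E3) (hy : ∀ u v, y u v = y1 u v • e u + y2 u v • n u + y3 u v • z u)
    -- relative shape operator, relative curvature and relative mean curvature
    (B : Fin 2 → Fin 2 → ℝ → ℝ → ℝ)
    (hB : ∀ u ∈ I, ∀ v : ℝ,
      pderivU y u v = -(B 0 0 u v • pderivU x u v + B 0 1 u v • pderivV x u v) ∧
      pderivV y u v = -(B 1 0 u v • pderivU x u v + B 1 1 u v • pderivV x u v))
    (K H : ℝ → ℝ → ℝ)
    (hK : ∀ u v, K u v = B 0 0 u v * B 1 1 u v - B 0 1 u v * B 1 0 u v)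
    (hH : ∀ u v, H u v = (B 0 0 u v + B 1 1 u v) / 2)
    -- the Pick invariant, formula (210), and the scalar curvature, formula (225)
    (J S : ℝ → ℝ → ℝ)
    (hJ : ∀ u v, v ≠ 0 → J u v = 3 * ((w u v)^2 * pderivV q u v + v * q u v)
        / (2 * (δ u)^2 * (w u v)^3 * q u v)
      * ((w u v)^2 * (κ u * q u v * v + 2 * δ u * pderivU q u v
          + pderivV q u v * (κ u * (w u v)^2 + deriv δ u * v - (δ u)^2 * lam u))
        - (δ u)^2 * q u v * (lam u * v - deriv δ u)))
    (hS : ∀ u v, v ≠ 0 → S u v = (1 / (2 * (δ u)^2 * (w u v)^3 * q u v))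
      * ((q u v)^2 * (-(κ u) * (w u v)^4
          + (δ u)^2 * (lam u * v^2 - 2 * deriv δ u * v - (δ u)^2 * lam u))
        + (w u v)^4 * q u v * pderivV q u v * (2 * κ u * v + deriv δ u)
        + (w u v)^4 * (κ u * (w u v)^2 + deriv δ u * v - (δ u)^2 * lam u)
          * (q u v * pderivV (pderivV q) u v - (pderivV q u v)^2)
        - 2 * δ u * (w u v)^4 * pderivU q u v * pderivV q u v
        + 2 * δ u * (w u v)^4 * q u v * pderivV (pderivU q) u v)) :
    ∀ u ∈ I, ∀ v : ℝ,
      H u v = deriv g u / δ u ∧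
      K u v = (deriv g u / δ u)^2 ∧
      (v ≠ 0 →
        S u v = -(g u) * (κ u * v^2 + (δ u)^2 * (κ u - lam u)) / (2 * (δ u)^2 * v) ∧
        J u v = 3 * (κ u * g u * v^2 + 2 * δ u * deriv g u * v
          + (δ u)^2 * g u * (κ u - lam u)) / (2 * (δ u)^2 * v)) ∧
      (H u v)^2 - K u v = 0 := by
  obtain rfl : n = deriv e := funext hn
  obtain rfl : z = centralTangent e := funext hz
  obtain rfl : x = ruledSurface s e := funext₂ hx
  obtain rfl : w = areaDensity δ := funext₂ hw
  obtain rfl : q = centralSupport δ g := funext₂ hqdef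
  obtain rfl : y = relNormal δ κ (centralSupport δ g) e (deriv e) (centralTangent e) :=
    funext₂ fun u v => by rw [hy, hy1, hy2, hy3, relNormal]
  intro u hu v
  let b : Matrix (Fin 2) (Fin 2) ℝ := Matrix.of fun i j => B i j u v
  have hHb : H u v = b.trace / 2 := by rw [hH, trace_fin_two]; rfl
  have hKb : K u v = b.det := by rw [hK, det_fin_two]; rfl
  obtain ⟨hmean, hcurv, hSJ, humb⟩ := stmt_15_general hI (contDiff_infty.1 hs 2).contDiffOn
    (contDiff_infty.1 he 3).contDiffOn heu he'u (fun t _ => hκ t) (fun t _ => hδ t) hδ0 hstr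
    (contDiff_infty.1 hg 2).contDiffOn hg0 hu (b := b) (hB u hu v)
  rw [hHb, hKb]
  exact ⟨hmean, hcurv, fun hv => ⟨(hS u v hv).trans (hSJ hv).1, (hJ u v hv).trans (hSJ hv).2⟩,
    humb⟩
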